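/- Let d = (d_1, …, d_n) be a graphical degree sequence with d_min ≥ 1 and 3 ≤ d_max ≤ (1/3)·√M, and let Z ∈ Ω(d). Then for every (p,q) ∈ {(2,1), (2,0), (1,2), (1,1), (1,0)}, one has |C(p,q)| ≤ 2·d_max^2·|C(p−1, q)|, where C(p,q) is the set of good encodings consistent with Z having exactly p 2-defect edges and exactly q (−1)-defect edges. -/

import Mathlib

/-! The bound is a double count of switchings. Given `L ∈ C(p + 1, q)`, an ordered `2`-edge `(a, b)`
and an ordered `1`-edge `(u, v)` such that `a` is neither equal nor adjacent to `u`, nor `b` to `v`,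
move one unit from each of `ab` and `uv` to each of `au` and `bv`. This preserves the row sums,
turns `ab` into a `1`-edge and creates no defect, so the result lies in `C(p, q)`, all conditions on
defects being inherited by sub-configurations.

Write `D` for the maximum degree. As `a` and `b` have few neighbours, each element of `C(p + 1, q)`
admits at least `2 * (p + 1) * T` switchings with `T = M - 4 * (p + 1) - 2 * D² - 2 * q * (D + 1)`.
Conversely, `(a, b)`, `(a, u)` and `(b, v)` are `1`-edges of the result, and the result together
with `a, b, u, v` determines `L`. Hence each element of `C(p, q)` is the result of at most
`(M + 2 * q - 4 * p) * (D + 1)²` switchings. Since `M ≥ 9 * D²` and `D ≥ 3`, the quotient of the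
two counts is at most `2 * D²`. -/

open scoped Classical

noncomputable section

namespace SwitchChain

variable {n : ℕ}

/-- `Omega d` is the set of simple graphs on `[n] = Fin n` with degree sequence `d`. -/
def Omega (d : Fin n → ℕ) : Set (SimpleGraph (Fin n)) :=
  {G | ∀ v, {w | G.Adj v w}.ncard = d v}

/-- `M d` is the sum of the degrees. -/
def M (d : Fin n → ℕ) : ℕ := ∑ j, d j

/-- The maximum degree. -/
def dmax (d : Fin n → ℕ) : ℕ := Finset.univ.sup d

/-- An encoding for the degree sequence `d`: a symmetric integer matrix with zero
diagonal, entries in `{-1, 0, 1, 2}`, and row sums `d`. -/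
def IsEncoding (d : Fin n → ℕ) (L : Matrix (Fin n) (Fin n) ℤ) : Prop :=
  (∀ i j, L i j = L j i) ∧ (∀ i, L i i = 0) ∧
  (∀ i j, L i j = -1 ∨ L i j = 0 ∨ L i j = 1 ∨ L i j = 2) ∧
  (∀ i, ∑ j, L i j = (d i : ℤ))

/-- The set of (unordered) edges of `L` carrying the label `c`. -/
def labelEdges (L : Matrix (Fin n) (Fin n) ℤ) (c : ℤ) : Set (Sym2 (Fin n)) :=
  {e | ∃ x y : Fin n, e = s(x, y) ∧ x ≠ y ∧ L x y = c}

/-- Every defect edge of `L` occurs, with its label, in the labelled edge set `D`. -/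
def DefectsWithin (L : Matrix (Fin n) (Fin n) ℤ) (D : Set (Sym2 (Fin n) × ℤ)) : Prop :=
  ∀ x y : Fin n, x ≠ y → (L x y = 2 ∨ L x y = -1) → (s(x, y), L x y) ∈ D

/-- A valid encoding: at most four defect edges, forming a labelled subgraph of one
of the five possible configurations. -/
def ValidEncoding (d : Fin n → ℕ) (L : Matrix (Fin n) (Fin n) ℤ) : Prop :=
  IsEncoding d L ∧
  (labelEdges L 2).ncard + (labelEdges L (-1)).ncard ≤ 4 ∧
  ∃ (a b c u e f : Fin n) (ℓ : ℤ), (ℓ = -1 ∨ ℓ = 2) ∧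
    (([a, b, c, u].Pairwise (· ≠ ·) ∧ e ≠ f ∧
        e ∉ ({a, b, c, u} : Set (Fin n)) ∧ f ∉ ({a, b, c, u} : Set (Fin n)) ∧
        DefectsWithin L {(s(a, b), 2), (s(b, c), -1), (s(b, u), -1), (s(e, f), ℓ)}) ∨
     ([a, b, c, u, e].Pairwise (· ≠ ·) ∧
        DefectsWithin L {(s(a, b), 2), (s(b, c), -1), (s(b, u), -1), (s(u, e), ℓ)}) ∨
     ([a, b, c, u, e].Pairwise (· ≠ ·) ∧
        DefectsWithin L {(s(a, b), -1), (s(b, c), -1), (s(b, u), 2), (s(u, e), ℓ)}) ∨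
     ([a, b, c, u].Pairwise (· ≠ ·) ∧
        DefectsWithin L {(s(a, b), -1), (s(b, c), -1), (s(b, u), 2), (s(u, c), ℓ)}) ∨
     ([a, b, c, u].Pairwise (· ≠ ·) ∧
        DefectsWithin L {(s(a, b), 2), (s(b, c), -1), (s(b, u), -1), (s(u, c), ℓ)}))

/-- A good encoding: a valid encoding satisfying the degree conditions of
Lemma 2.3. -/
def GoodEncoding (d : Fin n → ℕ) (L : Matrix (Fin n) (Fin n) ℤ) : Prop :=
  ValidEncoding d L ∧
  (∀ x y : Fin n, x ≠ y → L x y = 2 → 2 ≤ d x ∧ 2 ≤ d y) ∧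
  (∀ x y z : Fin n, x ≠ y → y ≠ z → x ≠ z → L x y = 2 → L y z = 2 → 4 ≤ d y) ∧
  (∀ x y z : Fin n, x ≠ y → y ≠ z → x ≠ z → L x y = 2 → L y z = -1 → 3 ≤ d y)

/-- The 0-1 adjacency matrix of a simple graph, over `ℤ`. -/
def adjMat (Z : SimpleGraph (Fin n)) : Matrix (Fin n) (Fin n) ℤ :=
  fun i j => if Z.Adj i j then 1 else 0

/-- `L` is consistent with `Z` if every entry of `L + Z` lies in `{0, 1, 2}`. -/
def ConsistentWith (L : Matrix (Fin n) (Fin n) ℤ) (Z : SimpleGraph (Fin n)) : Prop :=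
  ∀ i j, L i j + adjMat Z i j = 0 ∨ L i j + adjMat Z i j = 1 ∨ L i j + adjMat Z i j = 2


/-- `C(p,q)`: the set of good encodings consistent with `Z` having exactly `p`
2-defect edges and exactly `q` (−1)-defect edges. -/
def Cset (d : Fin n → ℕ) (Z : SimpleGraph (Fin n)) (p q : ℕ) :
    Set (Matrix (Fin n) (Fin n) ℤ) :=
  {L | GoodEncoding d L ∧ ConsistentWith L Z ∧
    (labelEdges L 2).ncard = p ∧ (labelEdges L (-1)).ncard = q}

open scoped Finset

section Counting

lemma card_mul_le_card_mul_of_injective {α β ι : Type*} {s : Finset α} {t : Finset β}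
    {A : α → Finset ι} {B : β → Finset ι} {f : ι → α → β} {m k : ℕ}
    (hf : ∀ i, (f i).Injective) (hAB : ∀ x ∈ s, ∀ i ∈ A x, f i x ∈ t ∧ i ∈ B (f i x))
    (hA : ∀ x ∈ s, m ≤ #(A x)) (hB : ∀ y ∈ t, #(B y) ≤ k) : #s * m ≤ #t * k := by
  calc #s * m ≤ ∑ x ∈ s, #(A x) := s.card_nsmul_le_sum _ m hA
    _ = #(s.sigma A) := (Finset.card_sigma s A).symm
    _ ≤ #(t.sigma B) := by
        refine Finset.card_le_card_of_injOn (fun w ↦ ⟨f w.2 w.1, w.2⟩) ?_ ?_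
        · rintro ⟨x, i⟩ hx
          simpa only [Finset.coe_sigma, Set.mem_sigma_iff, Finset.mem_coe] using
            hAB x (Finset.mem_sigma.1 hx).1 i (Finset.mem_sigma.1 hx).2
        · rintro ⟨x, i⟩ - ⟨y, j⟩ - h
          simp only [Sigma.mk.injEq, heq_eq_eq] at h
          obtain ⟨h, rfl⟩ := h
          rw [hf i h]
    _ = ∑ y ∈ t, #(B y) := Finset.card_sigma t B
    _ ≤ #t * k := t.sum_le_card_nsmul _ k hB

variable {V : Type*} [Fintype V] (G : SimpleGraph V) [DecidableRel G.Adj]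

lemma card_interedges_univ_right (s : Finset V) :
    #(G.interedges s Finset.univ) = ∑ x ∈ s, G.degree x := by
  simp only [G.interedges_def, Finset.card_filter, Finset.sum_product,
    ← G.card_neighborFinset_eq_degree, G.neighborFinset_eq_filter]

lemma card_interedges_univ_left (t : Finset V) :
    #(G.interedges Finset.univ t) = ∑ y ∈ t, G.degree y := by
  rw [← card_interedges_univ_right]
  have := G.symm
  exact Rel.card_interedges_comm _ _

lemma card_interedges_univ_univ :
    #(G.interedges Finset.univ Finset.univ) = 2 * #G.edgeFinset := by
  rw [card_interedges_univ_right, G.sum_degrees_eq_twice_card_edges]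

lemma two_mul_card_edgeFinset_le_card_interedges_compl [DecidableEq V]
    (s t : Finset V) :
    2 * #G.edgeFinset ≤
      #(G.interedges sᶜ tᶜ) + (∑ x ∈ s, G.degree x + ∑ y ∈ t, G.degree y) := by
  have hcover : G.interedges Finset.univ Finset.univ ⊆
      G.interedges sᶜ tᶜ ∪ (G.interedges s Finset.univ ∪ G.interedges Finset.univ t) := by
    intro w
    simp only [Finset.mem_union, G.mem_interedges_iff, Finset.mem_compl, Finset.mem_univ, true_and]
    tauto
  rw [← card_interedges_univ_univ, ← card_interedges_univ_right, ← card_interedges_univ_left]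
  exact (Finset.card_le_card hcover).trans <|
    (Finset.card_union_le _ _).trans (Nat.add_le_add_left (Finset.card_union_le _ _) _)

lemma degree_add_degree_le_card_edgeFinset {x y : V} (hne : x ≠ y) (hxy : ¬G.Adj x y) :
    G.degree x + G.degree y ≤ #G.edgeFinset := by
  have hdisj : Disjoint (G.incidenceFinset x) (G.incidenceFinset y) := by
    rw [← Finset.disjoint_coe, G.coe_incidenceFinset, G.coe_incidenceFinset,
      Set.disjoint_iff_inter_eq_empty]
    exact G.incidenceSet_inter_incidenceSet_of_not_adj hxy hne
  rw [← G.card_incidenceFinset_eq_degree, ← G.card_incidenceFinset_eq_degree,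
    ← Finset.card_union_of_disjoint hdisj]
  exact Finset.card_le_card
    (Finset.union_subset (G.incidenceFinset_subset x) (G.incidenceFinset_subset y))

end Counting

section LabelGraph

variable {d : Fin n → ℕ} {L : Matrix (Fin n) (Fin n) ℤ}

/-- The graph formed by the edges of `L` with label `c`. -/
def labelGraph (L : Matrix (Fin n) (Fin n) ℤ) (c : ℤ) : SimpleGraph (Fin n) :=
  .fromRel fun x y ↦ L x y = c

lemma edgeSet_labelGraph (L : Matrix (Fin n) (Fin n) ℤ) (c : ℤ) :
    (labelGraph L c).edgeSet = labelEdges L c := by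
  ext e
  induction e with | h x y
  simp only [labelGraph, labelEdges, SimpleGraph.mem_edgeSet, SimpleGraph.fromRel_adj,
    Set.mem_ofPred_eq, Sym2.eq_iff]
  grind

lemma ncard_labelEdges (L : Matrix (Fin n) (Fin n) ℤ) (c : ℤ) :
    (labelEdges L c).ncard = #(labelGraph L c).edgeFinset := by
  rw [← edgeSet_labelGraph, ← SimpleGraph.coe_edgeFinset, Set.ncard_coe_finset]

/-- The closed neighbourhood of `x` with respect to the edges of `L`, whatever their label. -/
def closedNbhd (L : Matrix (Fin n) (Fin n) ℤ) (x : Fin n) : Finset (Fin n) :=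
  insert x (Finset.univ.filter (L x · ≠ 0))

lemma le_dmax (d : Fin n → ℕ) (x : Fin n) : d x ≤ dmax d :=
  Finset.le_sup (Finset.mem_univ x)

namespace IsEncoding

lemma labelGraph_adj (hL : IsEncoding d L) {c : ℤ} (hc : c ≠ 0) (x y : Fin n) :
    (labelGraph L c).Adj x y ↔ L x y = c := by
  obtain ⟨hsymm, hdiag, -, -⟩ := hL
  rw [labelGraph, SimpleGraph.fromRel_adj, hsymm y x, or_self, and_iff_right_iff_imp]
  rintro hxy rfl
  exact hc (hxy.symm.trans (hdiag x))

lemma apply_eq_adjMatrix (hL : IsEncoding d L) (x y : Fin n) :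
    L x y = (labelGraph L 1).adjMatrix ℤ x y + 2 * (labelGraph L 2).adjMatrix ℤ x y
      - (labelGraph L (-1)).adjMatrix ℤ x y := by
  rcases hL.2.2.1 x y with h | h | h | h <;>
    simp [SimpleGraph.adjMatrix_apply, hL.labelGraph_adj, h]

lemma degree_add_two_mul_degree (hL : IsEncoding d L) (x : Fin n) :
    (labelGraph L 1).degree x + 2 * (labelGraph L 2).degree x =
      d x + (labelGraph L (-1)).degree x := by
  have hrow := hL.2.2.2 x
  simp_rw [fun y ↦ hL.apply_eq_adjMatrix x y] at hrow
  simp only [SimpleGraph.adjMatrix_apply, Finset.sum_sub_distrib, Finset.sum_add_distrib,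
    ← Finset.mul_sum, Finset.sum_boole, ← SimpleGraph.neighborFinset_eq_filter,
    SimpleGraph.card_neighborFinset_eq_degree] at hrow
  omega

lemma two_mul_card_edgeFinset_one (hL : IsEncoding d L) :
    2 * #(labelGraph L 1).edgeFinset + 4 * (labelEdges L 2).ncard =
      M d + 2 * (labelEdges L (-1)).ncard := by
  have h := Finset.sum_congr (rfl : (Finset.univ : Finset (Fin n)) = _) fun x _ ↦
    hL.degree_add_two_mul_degree x
  simp only [Finset.sum_add_distrib, ← Finset.mul_sum,
    SimpleGraph.sum_degrees_eq_twice_card_edges] at h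
  rw [ncard_labelEdges, ncard_labelEdges, M]
  omega

lemma degree_one_le (hL : IsEncoding d L) (x : Fin n) :
    (labelGraph L 1).degree x ≤ dmax d + (labelGraph L (-1)).degree x := by
  have := hL.degree_add_two_mul_degree x
  have := le_dmax d x
  omega

lemma closedNbhd_eq (hL : IsEncoding d L) (x : Fin n) :
    closedNbhd L x = insert x ((labelGraph L 1).neighborFinset x ∪
      ((labelGraph L 2).neighborFinset x ∪ (labelGraph L (-1)).neighborFinset x)) := by
  ext y
  rcases hL.2.2.1 x y with h | h | h | h <;> simp [closedNbhd, hL.labelGraph_adj, h]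

/- The `2`-edge at `a` counts twice in the row sum, which makes up for `a` itself. -/
lemma card_closedNbhd_le (hL : IsEncoding d L) {a b : Fin n} (hab : L a b = 2) :
    #(closedNbhd L a) ≤ dmax d + 2 * (labelGraph L (-1)).degree a := by
  have hcard : #(closedNbhd L a) ≤ (labelGraph L 1).degree a +
      ((labelGraph L 2).degree a + (labelGraph L (-1)).degree a) + 1 := by
    rw [hL.closedNbhd_eq]
    refine (Finset.card_insert_le _ _).trans (Nat.add_le_add_right ?_ 1)
    exact (Finset.card_union_le _ _).trans (Nat.add_le_add_left (Finset.card_union_le _ _) _)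
  have htwo : 0 < (labelGraph L 2).degree a :=
    ((labelGraph L 2).degree_pos_iff_exists_adj a).2 ⟨b, (hL.labelGraph_adj two_ne_zero a b).2 hab⟩
  have := hL.degree_add_two_mul_degree a
  have := le_dmax d a
  omega

lemma sum_degree_closedNbhd_le (hL : IsEncoding d L) {a b : Fin n} (hab : L a b = 2) :
    ∑ x ∈ closedNbhd L a, (labelGraph L 1).degree x ≤
      (dmax d + 2 * (labelGraph L (-1)).degree a) * dmax d + 2 * (labelEdges L (-1)).ncard := by
  calc ∑ x ∈ closedNbhd L a, (labelGraph L 1).degree x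
      ≤ ∑ x ∈ closedNbhd L a, (dmax d + (labelGraph L (-1)).degree x) :=
        Finset.sum_le_sum fun x _ ↦ hL.degree_one_le x
    _ = #(closedNbhd L a) * dmax d + ∑ x ∈ closedNbhd L a, (labelGraph L (-1)).degree x := by
        rw [Finset.sum_add_distrib, Finset.sum_const, smul_eq_mul]
    _ ≤ (dmax d + 2 * (labelGraph L (-1)).degree a) * dmax d
          + ∑ x, (labelGraph L (-1)).degree x := by
        gcongr
        · exact hL.card_closedNbhd_le hab
        · exact Finset.subset_univ _
    _ = _ := by rw [SimpleGraph.sum_degrees_eq_twice_card_edges, ncard_labelEdges]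

lemma ne_of_apply_ne_zero (hL : IsEncoding d L) {x y : Fin n} (hxy : L x y ≠ 0) : x ≠ y := by
  rintro rfl
  exact hxy (hL.2.1 x)

lemma degree_neg_one_add_le (hL : IsEncoding d L) {a b : Fin n} (hab : L a b = 2) :
    (labelGraph L (-1)).degree a + (labelGraph L (-1)).degree b ≤ (labelEdges L (-1)).ncard := by
  rw [ncard_labelEdges]
  refine degree_add_degree_le_card_edgeFinset _ (hL.ne_of_apply_ne_zero (by simp [hab])) ?_
  rw [hL.labelGraph_adj (by norm_num), hab]
  norm_num

lemma le_card_interedges_compl_closedNbhd (hL : IsEncoding d L) {a b : Fin n} (hab : L a b = 2) :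
    M d ≤ #((labelGraph L 1).interedges (closedNbhd L a)ᶜ (closedNbhd L b)ᶜ) +
      4 * (labelEdges L 2).ncard + 2 * dmax d ^ 2 +
      2 * (labelEdges L (-1)).ncard * (dmax d + 1) := by
  have htotal := hL.two_mul_card_edgeFinset_one
  have hcompl := two_mul_card_edgeFinset_le_card_interedges_compl (labelGraph L 1)
    (closedNbhd L a) (closedNbhd L b)
  have hsum_a := hL.sum_degree_closedNbhd_le hab
  have hsum_b := hL.sum_degree_closedNbhd_le ((hL.1 b a).trans hab)
  have hneg := Nat.mul_le_mul_right (2 * dmax d) (hL.degree_neg_one_add_le hab)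
  linarith

end IsEncoding

end LabelGraph

section Inheritance

variable {d : Fin n → ℕ} {L L' : Matrix (Fin n) (Fin n) ℤ} {Z : SimpleGraph (Fin n)}

/-- Every defect edge of `L'` is a defect edge of `L` with the same label. -/
def DefectsLE (L' L : Matrix (Fin n) (Fin n) ℤ) : Prop :=
  ∀ x y, L' x y = 2 ∨ L' x y = -1 → L x y = L' x y

lemma DefectsLE.ncard_labelEdges_le (h : DefectsLE L' L) {c : ℤ} (hc : c = 2 ∨ c = -1) :
    (labelEdges L' c).ncard ≤ (labelEdges L c).ncard := by
  refine Set.ncard_le_ncard ?_ (Set.toFinite _)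
  rintro _ ⟨x, y, rfl, hxy, rfl⟩
  exact ⟨x, y, rfl, hxy, h x y hc⟩

lemma DefectsLE.defectsWithin (h : DefectsLE L' L) {D : Set (Sym2 (Fin n) × ℤ)}
    (hD : DefectsWithin L D) : DefectsWithin L' D := by
  intro x y hxy hdefect
  have heq := h x y hdefect
  rw [← heq] at hdefect ⊢
  exact hD x y hxy hdefect

lemma ValidEncoding.of_defectsLE (hL : ValidEncoding d L) (hL' : IsEncoding d L')
    (h : DefectsLE L' L) : ValidEncoding d L' := by
  obtain ⟨-, hcard, a, b, c, u, e, f, l, hl, hconf⟩ := hL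
  refine ⟨hL', ?_, a, b, c, u, e, f, l, hl, ?_⟩
  · exact (Nat.add_le_add (h.ncard_labelEdges_le (.inl rfl))
      (h.ncard_labelEdges_le (.inr rfl))).trans hcard
  · exact hconf.imp
      (.imp_right <| .imp_right <| .imp_right <| .imp_right h.defectsWithin) <|
      .imp (.imp_right h.defectsWithin) <| .imp (.imp_right h.defectsWithin) <|
      .imp (.imp_right h.defectsWithin) (.imp_right h.defectsWithin)

lemma GoodEncoding.of_defectsLE (hL : GoodEncoding d L) (hL' : IsEncoding d L')
    (h : DefectsLE L' L) : GoodEncoding d L' := by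
  obtain ⟨hvalid, htwo, htwo_two, htwo_neg⟩ := hL
  have two {x y} (hxy : L' x y = 2) : L x y = 2 := (h x y (.inl hxy)).trans hxy
  have neg {x y} (hxy : L' x y = -1) : L x y = -1 := (h x y (.inr hxy)).trans hxy
  exact ⟨hvalid.of_defectsLE hL' h,
    fun x y hne h₁ ↦ htwo x y hne (two h₁),
    fun x y z h₁ h₂ h₃ h₄ h₅ ↦ htwo_two x y z h₁ h₂ h₃ (two h₄) (two h₅),
    fun x y z h₁ h₂ h₃ h₄ h₅ ↦ htwo_neg x y z h₁ h₂ h₃ (two h₄) (neg h₅)⟩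

lemma ConsistentWith.of_forall_eq_or (hL : ConsistentWith L Z)
    (h : ∀ x y, L' x y = L x y ∨ L' x y = 0 ∨ L' x y = 1) : ConsistentWith L' Z := by
  intro x y
  rcases h x y with hxy | hxy | hxy
  · rw [hxy]
    exact hL x y
  all_goals
    rw [hxy, adjMat]
    split_ifs <;> simp

end Inheritance

section Switch

variable {V : Type*} [DecidableEq V]

/-- The indicator matrix of the unordered pair `e`. -/
def edgeMatrix (e : Sym2 V) : Matrix V V ℤ := fun i j ↦ if s(i, j) = e then 1 else 0

lemma sum_edgeMatrix [Fintype V] {x y : V} (hxy : x ≠ y) (i : V) :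
    ∑ j, edgeMatrix s(x, y) i j = (if i = x then 1 else 0) + if i = y then 1 else 0 := by
  have h (j : V) : edgeMatrix s(x, y) i j =
      (if i = x then if j = y then 1 else 0 else 0) +
        if i = y then if j = x then 1 else 0 else 0 := by
    simp only [edgeMatrix, Sym2.eq_iff]
    grind
  simp [h, Finset.sum_add_distrib, Finset.sum_ite_irrel]

/-- The switching that moves one unit from each of the edges `ab` and `uv` to each of the pairs
`au` and `bv`. -/
def switch (L : Matrix V V ℤ) (a b u v : V) : Matrix V V ℤ :=
  L + (edgeMatrix s(a, u) + edgeMatrix s(b, v) - edgeMatrix s(a, b) - edgeMatrix s(u, v))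

lemma switch_injective (a b u v : V) : (switch · a b u v).Injective :=
  add_left_injective _

/-- The conditions on `a, b, u, v` under which switching `ab` and `uv` into `au` and `bv` removes
the `2`-defect at `ab` without creating a new defect. -/
structure Switchable (L : Matrix V V ℤ) (a b u v : V) : Prop where
  apply_ab : L a b = 2
  apply_uv : L u v = 1
  apply_au : L a u = 0
  apply_bv : L b v = 0
  ne_au : a ≠ u
  ne_bv : b ≠ v

end Switch

namespace Switchable

variable {d : Fin n → ℕ} {L : Matrix (Fin n) (Fin n) ℤ} {Z : SimpleGraph (Fin n)} {a b u v : Fin n}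
  {p q : ℕ}

lemma ne (hL : IsEncoding d L) (h : Switchable L a b u v) :
    a ≠ b ∧ u ≠ v ∧ a ≠ v ∧ b ≠ u := by
  obtain ⟨hsymm, hdiag, -, -⟩ := hL
  obtain ⟨hab, huv, hau, hbv, -, -⟩ := h
  refine ⟨?_, ?_, ?_, ?_⟩ <;> rintro rfl <;> grind

lemma switch_apply (hL : IsEncoding d L) (h : Switchable L a b u v) (i j : Fin n) :
    s(i, j) = s(a, b) ∧ L i j = 2 ∧ switch L a b u v i j = 1 ∨
      s(i, j) ≠ s(a, b) ∧ (switch L a b u v i j = L i j ∨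
        L i j = 1 ∧ switch L a b u v i j = 0 ∨ L i j = 0 ∧ switch L a b u v i j = 1) := by
  obtain ⟨hne_ab, hne_uv, hne_av, hne_bu⟩ := h.ne hL
  obtain ⟨hab, huv, hau, hbv, hne_au, hne_bv⟩ := h
  have hsymm := hL.1
  simp only [switch, Matrix.add_apply, Matrix.sub_apply, edgeMatrix, Sym2.eq_iff]
  grind

lemma switch_eq_or (hL : IsEncoding d L) (h : Switchable L a b u v) (i j : Fin n) :
    switch L a b u v i j = L i j ∨ switch L a b u v i j = 0 ∨ switch L a b u v i j = 1 := by
  have := h.switch_apply hL i j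
  tauto

lemma switch_eq_two_iff (hL : IsEncoding d L) (h : Switchable L a b u v) (i j : Fin n) :
    switch L a b u v i j = 2 ↔ L i j = 2 ∧ s(i, j) ≠ s(a, b) := by
  have := h.switch_apply hL i j
  grind

lemma switch_eq_neg_one_iff (hL : IsEncoding d L) (h : Switchable L a b u v) (i j : Fin n) :
    switch L a b u v i j = -1 ↔ L i j = -1 := by
  have := h.switch_apply hL i j
  grind

lemma defectsLE_switch (hL : IsEncoding d L) (h : Switchable L a b u v) :
    DefectsLE (switch L a b u v) L := by
  rintro x y (hxy | hxy) <;> rw [hxy]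
  · exact ((h.switch_eq_two_iff hL x y).1 hxy).1
  · exact (h.switch_eq_neg_one_iff hL x y).1 hxy

lemma labelEdges_switch_two (hL : IsEncoding d L) (h : Switchable L a b u v) :
    labelEdges (switch L a b u v) 2 = labelEdges L 2 \ {s(a, b)} := by
  ext e
  simp only [labelEdges, h.switch_eq_two_iff hL, Set.mem_sdiff, Set.mem_ofPred_eq,
    Set.mem_singleton_iff]
  grind

lemma labelEdges_switch_neg_one (hL : IsEncoding d L) (h : Switchable L a b u v) :
    labelEdges (switch L a b u v) (-1) = labelEdges L (-1) := by
  simp only [labelEdges, h.switch_eq_neg_one_iff hL]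

lemma isEncoding_switch (hL : IsEncoding d L) (h : Switchable L a b u v) :
    IsEncoding d (switch L a b u v) := by
  obtain ⟨hne_ab, hne_uv, -, -⟩ := h.ne hL
  have ⟨hsymm, hdiag, hentry, hrow⟩ := hL
  refine ⟨fun i j ↦ ?_, fun i ↦ ?_, fun i j ↦ ?_, fun i ↦ ?_⟩
  · simp only [switch, Matrix.add_apply, Matrix.sub_apply, edgeMatrix, hsymm i j,
      Sym2.eq_swap (a := i)]
  · have hdiag_edge {x y : Fin n} (hxy : x ≠ y) : edgeMatrix s(x, y) i i = 0 :=
      if_neg fun h ↦ hxy (by grind [Sym2.eq_iff])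
    simp [switch, hdiag, hdiag_edge, hne_ab, hne_uv, h.ne_au, h.ne_bv]
  · rcases h.switch_eq_or hL i j with hij | hij | hij
    · simpa only [hij] using hentry i j
    all_goals simp [hij]
  · simp only [switch, Matrix.add_apply, Matrix.sub_apply, Finset.sum_add_distrib,
      Finset.sum_sub_distrib, sum_edgeMatrix hne_ab, sum_edgeMatrix hne_uv,
      sum_edgeMatrix h.ne_au, sum_edgeMatrix h.ne_bv, hrow]
    ring

lemma switch_mem_Cset (hL : L ∈ Cset d Z (p + 1) q) (h : Switchable L a b u v) :
    switch L a b u v ∈ Cset d Z p q := by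
  obtain ⟨hgood, hcons, htwo, hneg⟩ := hL
  have henc : IsEncoding d L := hgood.1.1
  have hab : s(a, b) ∈ labelEdges L 2 := ⟨a, b, rfl, (h.ne henc).1, h.apply_ab⟩
  refine ⟨hgood.of_defectsLE (h.isEncoding_switch henc) (h.defectsLE_switch henc),
    hcons.of_forall_eq_or (h.switch_eq_or henc), ?_, ?_⟩
  · rw [h.labelEdges_switch_two henc, Set.ncard_sdiff_singleton_of_mem hab, htwo,
      Nat.add_sub_cancel]
  · rw [h.labelEdges_switch_neg_one henc, hneg]

lemma switch_apply_eq_one (hL : IsEncoding d L) (h : Switchable L a b u v) :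
    switch L a b u v a b = 1 ∧ switch L a b u v a u = 1 ∧ switch L a b u v b v = 1 := by
  obtain ⟨hne_ab, hne_uv, hne_av, hne_bu⟩ := h.ne hL
  obtain ⟨hab, -, hau, hbv, hne_au, hne_bv⟩ := h
  simp only [switch, Matrix.add_apply, Matrix.sub_apply, edgeMatrix, Sym2.eq_iff]
  grind

end Switchable

section DoubleCounting

variable {d : Fin n → ℕ} {L : Matrix (Fin n) (Fin n) ℤ} {Z : SimpleGraph (Fin n)} {p q : ℕ}

/-- The switchings available at `L`: each consists of an ordered `2`-edge `(a, b)` and of an ordered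
`1`-edge `(u, v)` such that `a` is neither equal nor adjacent to `u`, nor `b` to `v`. -/
def switchings (L : Matrix (Fin n) (Fin n) ℤ) : Finset (Σ _ : Fin n × Fin n, Fin n × Fin n) :=
  ((labelGraph L 2).interedges Finset.univ Finset.univ).sigma fun w ↦
    (labelGraph L 1).interedges (closedNbhd L w.1)ᶜ (closedNbhd L w.2)ᶜ

/-- The candidates for switchings with result `L`: each consists of an ordered `1`-edge `(a, b)` and
of a further `1`-neighbour of each of `a` and `b`. -/
def reverseSwitchings (L : Matrix (Fin n) (Fin n) ℤ) :
    Finset (Σ _ : Fin n × Fin n, Fin n × Fin n) :=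
  ((labelGraph L 1).interedges Finset.univ Finset.univ).sigma fun w ↦
    ((labelGraph L 1).neighborFinset w.1).erase w.2 ×ˢ
      ((labelGraph L 1).neighborFinset w.2).erase w.1

lemma mem_switchings (hL : IsEncoding d L) {a b u v : Fin n} :
    ⟨(a, b), (u, v)⟩ ∈ switchings L ↔ Switchable L a b u v := by
  simp only [switchings, closedNbhd, Finset.mem_sigma, SimpleGraph.mk_mem_interedges_iff,
    hL.labelGraph_adj one_ne_zero, hL.labelGraph_adj two_ne_zero, Finset.mem_compl,
    Finset.mem_insert, Finset.mem_filter, Finset.mem_univ, true_and, not_or, not_not]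
  exact ⟨fun ⟨hab, ⟨hua, hau⟩, ⟨hvb, hbv⟩, huv⟩ ↦ ⟨hab, huv, hau, hbv, Ne.symm hua, Ne.symm hvb⟩,
    fun ⟨hab, huv, hau, hbv, hne_au, hne_bv⟩ ↦ ⟨hab, ⟨hne_au.symm, hau⟩, ⟨hne_bv.symm, hbv⟩, huv⟩⟩

lemma Switchable.mem_reverseSwitchings (hL : IsEncoding d L) {a b u v : Fin n}
    (h : Switchable L a b u v) : ⟨(a, b), (u, v)⟩ ∈ reverseSwitchings (switch L a b u v) := by
  obtain ⟨-, -, hne_av, hne_bu⟩ := h.ne hL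
  obtain ⟨hab, hau, hbv⟩ := h.switch_apply_eq_one hL
  simp [reverseSwitchings, SimpleGraph.mk_mem_interedges_iff,
    (h.isEncoding_switch hL).labelGraph_adj, hab, hau, hbv, hne_av.symm, hne_bu.symm]

lemma le_card_switchings (hL : IsEncoding d L) {T : ℕ}
    (hT : T + 4 * (labelEdges L 2).ncard + 2 * dmax d ^ 2 +
      2 * (labelEdges L (-1)).ncard * (dmax d + 1) ≤ M d) :
    2 * (labelEdges L 2).ncard * T ≤ #(switchings L) := by
  rw [switchings, Finset.card_sigma, ncard_labelEdges, ← card_interedges_univ_univ]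
  refine Finset.card_nsmul_le_sum _ _ T fun w hw ↦ ?_
  have hab : L w.1 w.2 = 2 :=
    (hL.labelGraph_adj two_ne_zero _ _).1 ((SimpleGraph.mem_interedges_iff _).1 hw).2.2
  have := hL.le_card_interedges_compl_closedNbhd hab
  omega

lemma card_reverseSwitchings_le (hL : IsEncoding d L) (hneg : (labelEdges L (-1)).ncard ≤ 2) :
    #(reverseSwitchings L) ≤ 2 * #(labelGraph L 1).edgeFinset * (dmax d + 1) ^ 2 := by
  have hdeg (x : Fin n) : (labelGraph L 1).degree x - 1 ≤ dmax d + 1 := by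
    have := hL.degree_one_le x
    have := (labelGraph L (-1)).degree_le_card_edgeFinset x
    rw [ncard_labelEdges] at hneg
    omega
  rw [reverseSwitchings, Finset.card_sigma, ← card_interedges_univ_univ]
  refine Finset.sum_le_card_nsmul _ _ _ fun w hw ↦ ?_
  have hadj : (labelGraph L 1).Adj w.1 w.2 := ((SimpleGraph.mem_interedges_iff _).1 hw).2.2
  rw [Finset.card_product, sq,
    Finset.card_erase_of_mem ((SimpleGraph.mem_neighborFinset ..).2 hadj),
    Finset.card_erase_of_mem ((SimpleGraph.mem_neighborFinset ..).2 hadj.symm)]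
  exact Nat.mul_le_mul (hdeg w.1) (hdeg w.2)

lemma finite_Cset (d : Fin n → ℕ) (Z : SimpleGraph (Fin n)) (p q : ℕ) : (Cset d Z p q).Finite := by
  have hentries : {f : Fin n → Fin n → ℤ | ∀ i, f i ∈
      {g : Fin n → ℤ | ∀ j, g j ∈ ({-1, 0, 1, 2} : Set ℤ)}}.Finite :=
    .pi' fun _ ↦ .pi' fun _ ↦ Set.toFinite _
  exact hentries.subset fun L hL i j ↦ hL.1.1.1.2.2.1 i j

lemma ncard_Cset_mul_le {T K : ℕ} (hq : q ≤ 2)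
    (hT : T + 4 * (p + 1) + 2 * dmax d ^ 2 + 2 * q * (dmax d + 1) ≤ M d)
    (hK : M d + 2 * q ≤ K + 4 * p) :
    (Cset d Z (p + 1) q).ncard * (2 * (p + 1) * T) ≤
      (Cset d Z p q).ncard * (K * (dmax d + 1) ^ 2) := by
  rw [Set.ncard_eq_toFinset_card _ (finite_Cset d Z (p + 1) q),
    Set.ncard_eq_toFinset_card _ (finite_Cset d Z p q)]
  refine card_mul_le_card_mul_of_injective (A := switchings) (B := reverseSwitchings)
    (f := fun w L ↦ switch L w.1.1 w.1.2 w.2.1 w.2.2) (fun w ↦ switch_injective _ _ _ _) ?_ ?_ ?_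
  all_goals simp only [Set.Finite.mem_toFinset]
  · rintro L hL ⟨⟨a, b⟩, u, v⟩ hw
    have hL' : IsEncoding d L := hL.1.1.1
    have hsw : Switchable L a b u v := (mem_switchings hL').1 hw
    exact ⟨hsw.switch_mem_Cset hL, hsw.mem_reverseSwitchings hL'⟩
  · rintro L ⟨⟨⟨hL, -⟩, -⟩, -, htwo, hneg⟩
    rw [← htwo, ← hneg] at hT
    simpa only [htwo] using le_card_switchings hL hT
  · rintro L ⟨⟨⟨hL, -⟩, -⟩, -, htwo, hneg⟩
    refine (card_reverseSwitchings_le hL (hneg.trans_le hq)).trans ?_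
    have hone := hL.two_mul_card_edgeFinset_one
    gcongr
    omega

lemma add_le_four_of_nonempty_Cset (h : (Cset d Z p q).Nonempty) : p + q ≤ 4 := by
  obtain ⟨L, ⟨⟨-, hcard, -⟩, -⟩, -, rfl, rfl⟩ := h
  exact hcard

end DoubleCounting

/- `(D + 1) ^ 2 ≤ 16 / 9 * D ^ 2` because `3 ≤ D`, so it suffices that `4 * K ≤ 9 * (p + 1) * T`. -/
lemma exists_switching_counts {D m p q : ℕ} (hD : 3 ≤ D) (hm : 9 * D ^ 2 ≤ m) (hq : q ≤ 2)
    (hpq : p + q ≤ 3) : ∃ T K : ℕ, 0 < T ∧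
      T + 4 * (p + 1) + 2 * D ^ 2 + 2 * q * (D + 1) ≤ m ∧ m + 2 * q ≤ K + 4 * p ∧
      K * (D + 1) ^ 2 ≤ 2 * D ^ 2 * (2 * (p + 1) * T) := by
  have hsq : 3 * D ≤ D ^ 2 := by nlinarith
  obtain ⟨T, K, hTpos, hT, hK, hKT⟩ : ∃ T K : ℕ, 0 < T ∧
      T + 4 * (p + 1) + 2 * D ^ 2 + 2 * q * (D + 1) ≤ m ∧ m + 2 * q ≤ K + 4 * p ∧
      4 * K ≤ 9 * ((p + 1) * T) := by
    refine ⟨m - (4 * (p + 1) + 2 * D ^ 2 + 2 * q * (D + 1)), m + 2 * q - 4 * p, ?_⟩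
    have hp : p ≤ 3 := by omega
    interval_cases p <;> interval_cases q <;> omega
  refine ⟨T, K, hTpos, hT, hK, ?_⟩
  have hsucc : 9 * (D + 1) ^ 2 ≤ 16 * D ^ 2 := by nlinarith
  have := Nat.mul_le_mul hKT hsucc
  linarith

theorem phase2_bound_general {d : Fin n → ℕ} (hdmax : 3 ≤ dmax d) (hM : 9 * dmax d ^ 2 ≤ M d)
    (Z : SimpleGraph (Fin n)) (p : ℕ) {q : ℕ} (hq : q ≤ 2) :
    (Cset d Z (p + 1) q).ncard ≤ 2 * dmax d ^ 2 * (Cset d Z p q).ncard := by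
  rcases (Cset d Z (p + 1) q).eq_empty_or_nonempty with hempty | hne
  · simp [hempty]
  have hpq : p + q ≤ 3 := by
    have := add_le_four_of_nonempty_Cset hne
    omega
  obtain ⟨T, K, hTpos, hT, hK, hratio⟩ := exists_switching_counts hdmax hM hq hpq
  refine Nat.le_of_mul_le_mul_right ?_ (by positivity : 0 < 2 * (p + 1) * T)
  calc (Cset d Z (p + 1) q).ncard * (2 * (p + 1) * T)
      ≤ (Cset d Z p q).ncard * (K * (dmax d + 1) ^ 2) := ncard_Cset_mul_le hq hT hK
    _ ≤ (Cset d Z p q).ncard * (2 * dmax d ^ 2 * (2 * (p + 1) * T)) :=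
        Nat.mul_le_mul_left _ hratio
    _ = 2 * dmax d ^ 2 * (Cset d Z p q).ncard * (2 * (p + 1) * T) := by ring

lemma nine_mul_sq_le_of_le_sqrt {D m : ℕ} (h : (D : ℝ) ≤ 1 / 3 * √m) : 9 * D ^ 2 ≤ m := by
  have hsq : (3 * D : ℝ) ^ 2 ≤ m :=
    (Real.le_sqrt (by positivity) (Nat.cast_nonneg m)).1 (by linarith)
  exact_mod_cast (by linarith : (9 * D ^ 2 : ℝ) ≤ m)

/-- Phase 2 bound: for `(p,q) ∈ {(2,1), (2,0), (1,2), (1,1), (1,0)}`,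
`|C(p,q)| ≤ 2 d_max² |C(p−1, q)|`. -/
theorem phase2_bound
    (d : Fin n → ℕ) (hgraphical : (Omega d).Nonempty)
    (hdmin : ∀ v, 1 ≤ d v)
    (hdmax3 : 3 ≤ dmax d)
    (hdmaxM : (dmax d : ℝ) ≤ (1 / 3) * Real.sqrt (M d))
    (Z : SimpleGraph (Fin n)) (hZ : Z ∈ Omega d) :
    ∀ p q : ℕ,
      ((p, q) = (2, 1) ∨ (p, q) = (2, 0) ∨ (p, q) = (1, 2) ∨
        (p, q) = (1, 1) ∨ (p, q) = (1, 0)) →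
      (Cset d Z p q).ncard ≤ 2 * dmax d ^ 2 * (Cset d Z (p - 1) q).ncard := by
  rintro _ _ (h | h | h | h | h) <;> cases h <;>
    exact phase2_bound_general hdmax3 (nine_mul_sq_le_of_le_sqrt hdmaxM) Z _ (by norm_num)

end SwitchChain
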